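/- arXiv:1303.1090 — 5 statements merged into one kernel-verified Lean document; each statement's English description precedes it below -/
import Mathlib

section
/- Let f* be the optimal value of the problem of minimizing f(z) over z ∈ Q subject to g_j(z) ≤ 0 for j = 1,…,r. Assume an optimal solution z* exists with f(z*) = f*, and that μ* ∈ ℝ^r with μ* ≥ 0 is an optimal Lagrange multiplier vector, i.e. strong duality holds in the form f* = inf_{z ∈ Q} ( f(z) + Σ_{j=1}^r μ*_j g_j(z) ). If σ₁ ≥ ‖μ*‖_∞ and σ₂ ≥ 0, then f* equals the optimal value of the penalized problem: minimize f(z) + Σ_{j=1}^r ( σ₁·δ_j + σ₂·δ_j² ) over z ∈ Q and δ ∈ ℝ^r subject to g_j(z) ≤ δ_j and δ_j ≥ 0 for j = 1,…,r. -/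
/-!
Where `g z ≤ δ` and `0 ≤ δ`, any penalty `P` with `μ ⬝ᵥ δ ≤ P δ` satisfies
`f z + P δ ≥ f z + μ ⬝ᵥ δ ≥ f z + μ ⬝ᵥ g z`, and the Lagrangian on the right is bounded below by the
optimal value by strong duality. The bound is attained at `z = z*`, `δ = 0` as soon as `P 0 = 0`. A
linear penalty with slopes at least `μ` dominates `μ ⬝ᵥ δ`, and the quadratic term only increases
it.
-/

section ExactPenalty

variable {𝕜 X ι : Type*} [Semiring 𝕜] [PartialOrder 𝕜]

/-- The objective values of the penalized problem: minimize `f z + P δ` over `z ∈ Q` and slacks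
`δ ≥ 0` with `g j z ≤ δ j` for all `j`. The penalty `P` is an arbitrary function of the whole slack
vector. -/
def penalizedValues (f : X → 𝕜) (g : ι → X → 𝕜) (Q : Set X) (P : (ι → 𝕜) → 𝕜) : Set 𝕜 :=
  {v | ∃ z ∈ Q, ∃ δ : ι → 𝕜, (∀ j, g j z ≤ δ j) ∧ (∀ j, 0 ≤ δ j) ∧ v = f z + P δ}

variable [IsOrderedRing 𝕜] [Fintype ι] {f : X → 𝕜} {g : ι → X → 𝕜} {Q : Set X} {zstar : X}
  {μ : ι → 𝕜}

theorem isLeast_penalizedValues_of_dotProduct_le {P : (ι → 𝕜) → 𝕜} (hμ : 0 ≤ μ)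
    (hzQ : zstar ∈ Q) (hzfeas : ∀ j, g j zstar ≤ 0)
    (hdual : ∀ z ∈ Q, f zstar ≤ f z + ∑ j, μ j * g j z)
    (hP_zero : P 0 = 0) (hP : ∀ δ, 0 ≤ δ → μ ⬝ᵥ δ ≤ P δ) :
    IsLeast (penalizedValues f g Q P) (f zstar) := by
  refine ⟨⟨zstar, hzQ, 0, hzfeas, fun _ => le_rfl, by rw [hP_zero, add_zero]⟩, ?_⟩
  rintro _ ⟨z, hz, δ, hgδ, hδ, rfl⟩
  calc
    f zstar ≤ f z + μ ⬝ᵥ fun j => g j z := hdual z hz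
    _ ≤ f z + μ ⬝ᵥ δ := by gcongr; exact dotProduct_le_dotProduct_of_nonneg_left hgδ hμ
    _ ≤ f z + P δ := by gcongr; exact hP δ hδ

theorem dotProduct_le_sum_linear_add_sq {δ σ₁ σ₂ : ι → 𝕜} (hδ : 0 ≤ δ) (hσ₁ : μ ≤ σ₁)
    (hσ₂ : 0 ≤ σ₂) : μ ⬝ᵥ δ ≤ ∑ j, (σ₁ j * δ j + σ₂ j * δ j ^ 2) :=
  Finset.sum_le_sum fun j _ =>
    (mul_le_mul_of_nonneg_right (hσ₁ j) (hδ j)).trans <|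
      le_add_of_nonneg_right <| mul_nonneg (hσ₂ j) (pow_nonneg (hδ j) 2)

theorem exact_penalty_value_general {σ₁ σ₂ : ι → 𝕜} (hμ : 0 ≤ μ)
    (hzQ : zstar ∈ Q) (hzfeas : ∀ j, g j zstar ≤ 0)
    (hdual : ∀ z ∈ Q, f zstar ≤ f z + ∑ j, μ j * g j z) (hσ₁ : μ ≤ σ₁) (hσ₂ : 0 ≤ σ₂) :
    IsLeast (penalizedValues f g Q fun δ => ∑ j, (σ₁ j * δ j + σ₂ j * δ j ^ 2)) (f zstar) :=
  isLeast_penalizedValues_of_dotProduct_le hμ hzQ hzfeas hdual (by simp) fun _ hδ =>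
    dotProduct_le_sum_linear_add_sq hδ hσ₁ hσ₂

end ExactPenalty

/-- Exact penalty, part i.  Let `fstar` be the optimal value of
`min f(z) s.t. z ∈ Q, g_j(z) ≤ 0`, attained at `zstar`, and let `μ ≥ 0` be an optimal
Lagrange multiplier vector, i.e. `fstar = inf_{z ∈ Q} (f(z) + Σ_j μ_j g_j(z))`
(strong duality).  If `σ₁ ≥ ‖μ‖_∞` and `σ₂ ≥ 0`, then `fstar` equals the optimal value
(attained) of the penalized problem
`min_{z ∈ Q, δ ≥ 0, g_j(z) ≤ δ_j} f(z) + Σ_j (σ₁ δ_j + σ₂ δ_j²)`.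
Here `‖μ‖` is the sup-norm, since `Fin r → ℝ` carries the `Pi` (sup) norm. -/
theorem exact_penalty_value {n r : ℕ}
    (f : (Fin n → ℝ) → ℝ) (g : Fin r → (Fin n → ℝ) → ℝ) (Q : Set (Fin n → ℝ))
    (hQclosed : IsClosed Q) (hQconvex : Convex ℝ Q)
    (hf : ConvexOn ℝ Set.univ f) (hg : ∀ j, ConvexOn ℝ Set.univ (g j))
    (fstar : ℝ) (zstar : Fin n → ℝ) (μ : Fin r → ℝ) (hμ : ∀ j, 0 ≤ μ j)
    (hzQ : zstar ∈ Q) (hzfeas : ∀ j, g j zstar ≤ 0) (hzval : f zstar = fstar)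
    (hopt : ∀ z ∈ Q, (∀ j, g j z ≤ 0) → fstar ≤ f z)
    (hdual : IsGLB ((fun z => f z + ∑ j, μ j * g j z) '' Q) fstar)
    (σ1 σ2 : ℝ) (hσ1 : ‖μ‖ ≤ σ1) (hσ2 : 0 ≤ σ2) :
    IsLeast {v : ℝ | ∃ z ∈ Q, ∃ δ : Fin r → ℝ,
        (∀ j, g j z ≤ δ j) ∧ (∀ j, 0 ≤ δ j) ∧
        v = f z + ∑ j, (σ1 * δ j + σ2 * (δ j) ^ 2)} fstar := by
  subst hzval
  have hμσ1 : ∀ j, μ j ≤ σ1 := fun j => (le_abs_self _).trans ((norm_le_pi_norm μ j).trans hσ1)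
  exact exact_penalty_value_general hμ hzQ hzfeas (fun z hz => hdual.1 ⟨z, hz, rfl⟩) hμσ1
    fun _ => hσ2
end

section
/- Let f* be the optimal value of the problem of minimizing f(z) over z ∈ Q subject to g_j(z) ≤ 0 for j = 1,…,r. Assume an optimal solution z* exists with f(z*) = f*, and that μ* ∈ ℝ^r with μ* ≥ 0 is an optimal Lagrange multiplier vector, i.e. strong duality holds in the form f* = inf_{z ∈ Q} ( f(z) + Σ_{j=1}^r μ*_j g_j(z) ). If σ₁ > ‖μ*‖_∞ and σ₂ ≥ 0, then the set of minimizers of the penalized problem — minimize f(z) + Σ_{j=1}^r ( σ₁·δ_j + σ₂·δ_j² ) over z ∈ Q, δ ∈ ℝ^r subject to g_j(z) ≤ δ_j, δ_j ≥ 0 — coincides with the set of minimizers of the original problem, in the sense that (z, δ) is optimal for the penalized problem if and only if z is optimal for the original problem and δ = 0. -/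
/-!
Write `m δ = ⟨μ, δ⟩` and let `zstar` be feasible with `f zstar ≤ f z + m (g z)` on `Q`. Since
`μ ≥ 0`, replacing `g z` by a slack `δ ≥ g z` can only increase the right-hand side, so
`f zstar ≤ f z + m δ` for every feasible pair of the penalized problem. A penalty `p` with `p 0 = 0`
and `m δ < p δ` for `δ > 0` therefore makes every pair with `δ ≠ 0` strictly worse than
`(zstar, 0)`, and `δ = 0` leaves the original problem.
-/

section Penalty

variable {α E : Type*} [Zero E]

section Preorder

variable [Preorder E] {Q : Set α} {g : α → E}

/-- The feasible set of the constrained problem over `Q` with constraint `g z ≤ 0`; several scalar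
constraints are encoded by taking `E` to be a function space with the pointwise order. -/
def feasibleSet (Q : Set α) (g : α → E) : Set α :=
  {z | z ∈ Q ∧ g z ≤ 0}

/-- The feasible set of the penalized problem: pairs of a point of `Q` and a slack `δ ≥ 0` by which
it may violate the constraint `g z ≤ 0`. -/
def slackFeasibleSet (Q : Set α) (g : α → E) : Set (α × E) :=
  {w | w.1 ∈ Q ∧ g w.1 ≤ w.2 ∧ 0 ≤ w.2}

theorem mem_feasibleSet {z : α} : z ∈ feasibleSet Q g ↔ z ∈ Q ∧ g z ≤ 0 :=
  Iff.rfl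

theorem mk_mem_slackFeasibleSet {z : α} {δ : E} :
    (z, δ) ∈ slackFeasibleSet Q g ↔ z ∈ Q ∧ g z ≤ δ ∧ 0 ≤ δ :=
  Iff.rfl

theorem mk_zero_mem_slackFeasibleSet {z : α} :
    (z, (0 : E)) ∈ slackFeasibleSet Q g ↔ z ∈ feasibleSet Q g := by
  simp only [mk_mem_slackFeasibleSet, mem_feasibleSet, le_refl, and_true]

theorem forall_mem_slackFeasibleSet {P : α × E → Prop} :
    (∀ w ∈ slackFeasibleSet Q g, P w) ↔ ∀ z ∈ Q, ∀ δ, g z ≤ δ → 0 ≤ δ → P (z, δ) :=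
  ⟨fun h z hz δ hg hδ => h (z, δ) ⟨hz, hg, hδ⟩, fun h w hw => h w.1 hw.1 w.2 hw.2.1 hw.2.2⟩

theorem le_add_of_mem_slackFeasibleSet {R : Type*} [AddCommMonoid R] [Preorder R]
    [IsOrderedAddMonoid R] {f : α → R} {m : E → R} {c : R} (hm : Monotone m)
    (hc : ∀ z ∈ Q, c ≤ f z + m (g z)) {w : α × E} (hw : w ∈ slackFeasibleSet Q g) :
    c ≤ f w.1 + m w.2 := by
  obtain ⟨hQ, hg, -⟩ := hw
  grw [hc w.1 hQ, hm hg]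

end Preorder

variable [PartialOrder E] {R : Type*} [AddCommMonoid R] [PartialOrder R]
  [IsOrderedCancelAddMonoid R] {Q : Set α} {f : α → R} {g : α → E} {m p : E → R}

theorem snd_eq_zero_of_isMinOn_penalized {zstar : α} (hzstar : zstar ∈ feasibleSet Q g)
    (hm : Monotone m) (hdual : ∀ z ∈ Q, f zstar ≤ f z + m (g z))
    (hp₀ : p 0 = 0) (hmp : ∀ δ, 0 < δ → m δ < p δ)
    {w : α × E} (hw : w ∈ slackFeasibleSet Q g)
    (hmin : IsMinOn (fun w => f w.1 + p w.2) (slackFeasibleSet Q g) w) : w.2 = 0 := by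
  by_contra hne
  have hlt : m w.2 < p w.2 := hmp w.2 (hw.2.2.lt_of_ne' hne)
  refine lt_irrefl (f zstar) ?_
  calc
    f zstar ≤ f w.1 + m w.2 := le_add_of_mem_slackFeasibleSet hm hdual hw
    _ < f w.1 + p w.2 := by gcongr
    _ ≤ f zstar + p 0 := hmin (mk_zero_mem_slackFeasibleSet.2 hzstar)
    _ = f zstar := by rw [hp₀, add_zero]

theorem isMinOn_penalized_iff {zstar : α} (hzstar : zstar ∈ feasibleSet Q g)
    (hm : Monotone m) (hdual : ∀ z ∈ Q, f zstar ≤ f z + m (g z))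
    (hm₀ : m 0 = 0) (hp₀ : p 0 = 0) (hmp : ∀ δ, 0 < δ → m δ < p δ) {z : α} {δ : E} :
    ((z, δ) ∈ slackFeasibleSet Q g ∧
        IsMinOn (fun w => f w.1 + p w.2) (slackFeasibleSet Q g) (z, δ)) ↔
      z ∈ feasibleSet Q g ∧ IsMinOn f (feasibleSet Q g) z ∧ δ = 0 := by
  constructor
  · rintro ⟨hmem, hmin⟩
    obtain rfl : δ = 0 :=
      snd_eq_zero_of_isMinOn_penalized hzstar hm hdual hp₀ hmp hmem hmin
    refine ⟨mk_zero_mem_slackFeasibleSet.1 hmem, fun z' hz' => ?_, rfl⟩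
    exact le_of_add_le_add_right (hmin (mk_zero_mem_slackFeasibleSet.2 hz'))
  · rintro ⟨hmem, hmin, rfl⟩
    have hle : ∀ δ', 0 ≤ δ' → m δ' ≤ p δ' := fun δ' hδ' =>
      hδ'.eq_or_lt.elim (fun h => by rw [← h, hm₀, hp₀]) fun h => (hmp δ' h).le
    refine ⟨mk_zero_mem_slackFeasibleSet.2 hmem, fun w hw => ?_⟩
    calc
      f z + p 0 = f z := by rw [hp₀, add_zero]
      _ ≤ f zstar := hmin hzstar
      _ ≤ f w.1 + m w.2 := le_add_of_mem_slackFeasibleSet hm hdual hw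
      _ ≤ f w.1 + p w.2 := by grw [hle w.2 hw.2.2]

end Penalty

section LinearQuadratic

variable {ι R : Type*} [Fintype ι] [Semiring R] [PartialOrder R] [IsStrictOrderedRing R]
  {μ : ι → R} {σ₁ σ₂ : R}

theorem sum_mul_lt_sum_linear_add_quadratic (hμσ : ∀ j, μ j < σ₁) (hσ₂ : 0 ≤ σ₂)
    {δ : ι → R} (hδ : 0 < δ) :
    ∑ j, μ j * δ j < ∑ j, (σ₁ * δ j + σ₂ * δ j ^ 2) := by
  obtain ⟨hnonneg, i, hi⟩ := Pi.lt_def.1 hδ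
  have hquad : ∀ j, 0 ≤ σ₂ * δ j ^ 2 := fun j => mul_nonneg hσ₂ (pow_nonneg (hnonneg j) 2)
  refine Finset.sum_lt_sum (fun j _ => ?_) ⟨i, Finset.mem_univ i, ?_⟩
  · exact le_add_of_le_of_nonneg (mul_le_mul_of_nonneg_right (hμσ j).le (hnonneg j)) (hquad j)
  · exact lt_add_of_lt_of_nonneg (mul_lt_mul_of_pos_right (hμσ i) hi) (hquad i)

theorem exact_penalty_minimizers_general {α : Type*} {f : α → R} {g : α → ι → R} {Q : Set α}
    {zstar : α} (hzstar : zstar ∈ feasibleSet Q g) (hμ : ∀ j, 0 ≤ μ j)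
    (hdual : ∀ z ∈ Q, f zstar ≤ f z + ∑ j, μ j * g z j)
    (hμσ : ∀ j, μ j < σ₁) (hσ₂ : 0 ≤ σ₂) {z : α} {δ : ι → R} :
    ((z, δ) ∈ slackFeasibleSet Q g ∧
        IsMinOn (fun w => f w.1 + ∑ j, (σ₁ * w.2 j + σ₂ * w.2 j ^ 2))
          (slackFeasibleSet Q g) (z, δ)) ↔
      z ∈ feasibleSet Q g ∧ IsMinOn f (feasibleSet Q g) z ∧ δ = 0 := by
  have hmono : Monotone fun δ' : ι → R => ∑ j, μ j * δ' j := fun _ _ h =>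
    dotProduct_le_dotProduct_of_nonneg_left h hμ
  exact isMinOn_penalized_iff (p := fun δ' => ∑ j, (σ₁ * δ' j + σ₂ * δ' j ^ 2)) hzstar hmono hdual
    (by simp only [Pi.zero_apply, mul_zero, Finset.sum_const_zero])
    (by simp only [Pi.zero_apply, ne_eq, OfNat.ofNat_ne_zero, not_false_eq_true, zero_pow, mul_zero,
      add_zero, Finset.sum_const_zero])
    fun _ => sum_mul_lt_sum_linear_add_quadratic hμσ hσ₂

end LinearQuadratic

theorem apply_lt_of_pi_norm_lt {ι : Type*} [Fintype ι] {μ : ι → ℝ} {σ : ℝ} (h : ‖μ‖ < σ) (j : ι) :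
    μ j < σ :=
  (Real.le_norm_self _).trans_lt ((norm_le_pi_norm μ j).trans_lt h)

/-- Exact penalty, part ii.  Under the same assumptions as part i but with
the strict inequality `σ₁ > ‖μ‖_∞`, the minimizers of the penalized problem are exactly the
pairs `(z, δ)` with `z` a minimizer of the original problem and `δ = 0`.
Here `‖μ‖` is the sup-norm, since `Fin r → ℝ` carries the `Pi` (sup) norm. -/
theorem exact_penalty_minimizers {n r : ℕ}
    (f : (Fin n → ℝ) → ℝ) (g : Fin r → (Fin n → ℝ) → ℝ) (Q : Set (Fin n → ℝ))
    (hQclosed : IsClosed Q) (hQconvex : Convex ℝ Q)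
    (hf : ConvexOn ℝ Set.univ f) (hg : ∀ j, ConvexOn ℝ Set.univ (g j))
    (fstar : ℝ) (zstar : Fin n → ℝ) (μ : Fin r → ℝ) (hμ : ∀ j, 0 ≤ μ j)
    (hzQ : zstar ∈ Q) (hzfeas : ∀ j, g j zstar ≤ 0) (hzval : f zstar = fstar)
    (hopt : ∀ z ∈ Q, (∀ j, g j z ≤ 0) → fstar ≤ f z)
    (hdual : IsGLB ((fun z => f z + ∑ j, μ j * g j z) '' Q) fstar)
    (σ1 σ2 : ℝ) (hσ1 : ‖μ‖ < σ1) (hσ2 : 0 ≤ σ2) :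
    ∀ (z : Fin n → ℝ) (δ : Fin r → ℝ),
      (z ∈ Q ∧ (∀ j, g j z ≤ δ j) ∧ (∀ j, 0 ≤ δ j) ∧
        ∀ z' ∈ Q, ∀ δ' : Fin r → ℝ, (∀ j, g j z' ≤ δ' j) → (∀ j, 0 ≤ δ' j) →
          f z + ∑ j, (σ1 * δ j + σ2 * (δ j) ^ 2) ≤
            f z' + ∑ j, (σ1 * δ' j + σ2 * (δ' j) ^ 2))
      ↔ (z ∈ Q ∧ (∀ j, g j z ≤ 0) ∧
          (∀ z' ∈ Q, (∀ j, g j z' ≤ 0) → f z ≤ f z') ∧ δ = 0) := by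
  intro z δ
  simpa only [mk_mem_slackFeasibleSet, mem_feasibleSet, isMinOn_iff,
    forall_mem_slackFeasibleSet, Pi.le_def, Pi.zero_apply, and_imp, and_assoc] using
    exact_penalty_minimizers_general (g := fun z j => g j z) (z := z) (δ := δ) ⟨hzQ, hzfeas⟩ hμ
      (fun w hw => hzval ▸ hdual.1 ⟨w, hw, rfl⟩) (apply_lt_of_pi_norm_lt hσ1) hσ2
end

section
/- Let C be a real symmetric positive definite n×n matrix whose maximum eigenvalue is less than or equal to one, and let γ ∈ [0,1]. Then the 2n×2n block matrix M = [[(1+γ)(I−C), −γ(I−C)], [I, 0]] is Schur stable, i.e. its spectral radius ρ(M) is strictly less than one. -/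
/-!
Row reduction of `μ • 1 - M` shows that `μ` is an eigenvalue of `M` exactly when `μ ^ 2` is an
eigenvalue of `((1 + γ) * μ - γ) • (1 - C)`. Hence `μ ^ 2 - (1 + γ) * β * μ + γ * β = 0` for some
`β` with `1 - β` an eigenvalue of `C`. As `β` is real, the Schur–Cohn criterion applies: the roots
of a real polynomial `X ^ 2 - p * X + q` lie in the open unit disc if `|p| < 1 + q` and `q < 1`.
-/

open Matrix Set
open scoped ComplexOrder

section SchurCohn

lemma abs_lt_one_of_sq_sub_mul_add_eq_zero {R : Type*} [CommRing R] [LinearOrder R]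
    [IsStrictOrderedRing R] {p q x : R} (hp : |p| < 1 + q) (hq : q < 1)
    (hx : x ^ 2 - p * x + q = 0) : |x| < 1 := by
  obtain ⟨hp_neg, hp_pos⟩ := abs_lt.mp hp
  refine abs_lt.mpr ⟨?_, ?_⟩ <;> by_contra! hx_large
  · have hfactored : 0 ≤ (x + 1) * (x + q) :=
      mul_nonneg_of_nonpos_of_nonpos (by linarith) (by linarith)
    have hslack : 0 < (1 + q + p) * -x := mul_pos (by linarith) (by linarith)
    linarith
  · have hfactored : 0 ≤ (x - 1) * (x - q) := mul_nonneg (by linarith) (by linarith)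
    have hslack : 0 < (1 + q - p) * x := mul_pos (by linarith) (by linarith)
    linarith

lemma norm_lt_one_of_sq_sub_mul_add_eq_zero {p q : ℝ} {μ : ℂ} (hp : |p| < 1 + q)
    (hq : q < 1) (hμ : μ ^ 2 - p * μ + q = 0) : ‖μ‖ < 1 := by
  have hre : μ.re ^ 2 - μ.im ^ 2 - p * μ.re + q = 0 := by
    simpa [pow_two] using congrArg Complex.re hμ
  have him : μ.im * (2 * μ.re - p) = 0 := by
    have him_expanded : μ.re * μ.im + μ.im * μ.re - p * μ.im = 0 := by
      simpa [pow_two] using congrArg Complex.im hμ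
    linear_combination him_expanded
  rcases mul_eq_zero.mp him with hreal | hnonreal
  · rw [← Complex.abs_re_eq_norm.mpr hreal]
    exact abs_lt_one_of_sq_sub_mul_add_eq_zero hp hq (by simpa [hreal] using hre)
  · -- The roots are conjugate, so their product `q` is `‖μ‖ ^ 2`.
    have hnorm : ‖μ‖ ^ 2 = q := by
      rw [Complex.sq_norm, Complex.normSq_apply]
      linear_combination μ.re * hnonreal - hre
    exact (sq_lt_one_iff₀ (norm_nonneg μ)).mp (hnorm ▸ hq)

end SchurCohn

section Spectrum

variable {ι : Type*} [Fintype ι] [DecidableEq ι]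

lemma det_fromBlocks_neg_one₂₁ {R : Type*} [CommRing R] (A B D : Matrix ι ι R) :
    (fromBlocks A B (-1) D).det = (A * D + B).det :=
  calc (fromBlocks A B (-1) D).det
      = (fromBlocks 1 (A - 1) 0 1 * fromBlocks A B (-1) D).det := by simp
    _ = (fromBlocks 1 (B + (A - 1) * D) (-1) D).det := by simp [fromBlocks_multiply]
    _ = (A * D + B).det := by
      rw [det_fromBlocks_one₁₁]
      congr 1
      noncomm_ring

lemma mem_spectrum_fromBlocks_one_zero_iff {R : Type*} [CommRing R] {A B : Matrix ι ι R} {μ : R} :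
    μ ∈ spectrum R (fromBlocks A B (1 : Matrix ι ι R) 0) ↔ μ ^ 2 ∈ spectrum R (μ • A + B) := by
  have hblocks : algebraMap R _ μ - fromBlocks A B (1 : Matrix ι ι R) 0 =
      fromBlocks (μ • 1 - A) (-B) (-1) (μ • 1) := by
    rw [Algebra.algebraMap_eq_smul_one, ← fromBlocks_one, fromBlocks_smul, sub_eq_add_neg,
      fromBlocks_neg, fromBlocks_add]
    simp [sub_eq_add_neg]
  have hpencil : (μ • 1 - A) * μ • 1 + -B = algebraMap R _ (μ ^ 2) - (μ • A + B) := by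
    simp only [Algebra.algebraMap_eq_smul_one, Algebra.mul_smul_comm, mul_one, smul_sub, smul_smul,
      pow_two]
    abel
  rw [spectrum.mem_iff, spectrum.mem_iff, isUnit_iff_isUnit_det, isUnit_iff_isUnit_det, hblocks,
    det_fromBlocks_neg_one₂₁, hpencil]

lemma exists_mem_spectrum_of_mem_spectrum_smul_one_sub {K A : Type*} [Field K] [IsAlgClosed K]
    [Ring A] [Algebra K A] [FiniteDimensional K A] {a : A} {c z : K}
    (hz : z ∈ spectrum K (c • (1 - a))) : ∃ l ∈ spectrum K a, z = c * (1 - l) := by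
  obtain _ | _ := subsingleton_or_nontrivial A
  · simp at hz
  rw [spectrum.smul_eq_smul _ _ (spectrum.nonempty_of_isAlgClosed_of_finiteDimensional K _),
    ← map_one (algebraMap K A), ← spectrum.singleton_sub_eq, singleton_sub] at hz
  obtain ⟨_, ⟨l, hl, rfl⟩, rfl⟩ := hz
  exact ⟨l, hl, rfl⟩

lemma spectrum_map_of_splits_charpoly {K L : Type*} [Field K] [Field L] (f : K →+* L)
    {A : Matrix ι ι K} (hA : A.charpoly.Splits) :
    spectrum L (A.map f) = f '' spectrum K A := by
  ext z
  have hroots := hA.roots_map f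
  have hA0 := A.charpoly_monic.ne_zero
  simp only [mem_spectrum_iff_isRoot_charpoly, mem_image, charpoly_map,
    ← Polynomial.mem_roots hA0, ← Polynomial.mem_roots (Polynomial.map_ne_zero hA0), hroots,
    Multiset.mem_map]

lemma spectrum_subset_Ioi_zero_of_posDef {𝕜 : Type*} [RCLike 𝕜] {A : Matrix ι ι 𝕜}
    (hA : A.PosDef) : spectrum ℝ A ⊆ Ioi 0 := by
  rw [hA.isHermitian.spectrum_real_eq_range_eigenvalues]
  exact range_subset_iff.mpr hA.eigenvalues_pos

lemma spectrum_map_ofReal_subset_image_Ioo_of_posDef {A : Matrix ι ι ℝ} {b : ℝ} (hA : A.PosDef)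
    (hb : ∀ l ∈ spectrum ℝ A, l < b) :
    spectrum ℂ (A.map Complex.ofRealHom) ⊆ Complex.ofReal '' Ioo 0 b := by
  rw [spectrum_map_of_splits_charpoly _ hA.isHermitian.splits_charpoly]
  exact image_mono fun l hl ↦ ⟨spectrum_subset_Ioi_zero_of_posDef hA hl, hb l hl⟩

end Spectrum

section FGM

variable {ι : Type*} [DecidableEq ι]

/-- The block matrix that maps the pair of errors `(eₖ, eₖ₋₁)` of the fast gradient method to
`(eₖ₊₁, eₖ)`, for a quadratic objective with Hessian `C`, unit step size and momentum `γ`. -/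
def fgmErrorMatrix {R : Type*} [Ring R] (C : Matrix ι ι R) (γ : R) : Matrix (ι ⊕ ι) (ι ⊕ ι) R :=
  fromBlocks ((1 + γ) • (1 - C)) ((-γ) • (1 - C)) 1 0

lemma fgmErrorMatrix_map {R S : Type*} [Ring R] [Ring S] (f : R →+* S) (C : Matrix ι ι R) (γ : R) :
    (fgmErrorMatrix C γ).map f = fgmErrorMatrix (C.map f) (f γ) := by
  simp [fgmErrorMatrix, fromBlocks_map, Matrix.map_smul', Matrix.map_sub, -neg_smul]

variable [Fintype ι]

lemma exists_mem_spectrum_of_mem_spectrum_fgmErrorMatrix {K : Type*} [Field K] [IsAlgClosed K]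
    {C : Matrix ι ι K} {γ μ : K} (hμ : μ ∈ spectrum K (fgmErrorMatrix C γ)) :
    ∃ l ∈ spectrum K C, μ ^ 2 = ((1 + γ) * μ - γ) * (1 - l) := by
  have hpencil : μ • ((1 + γ) • (1 - C)) + (-γ) • (1 - C) = ((1 + γ) * μ - γ) • (1 - C) := by
    module
  exact exists_mem_spectrum_of_mem_spectrum_smul_one_sub
    (hpencil ▸ mem_spectrum_fromBlocks_one_zero_iff.mp hμ)

/-- The interval for the eigenvalues of `C` encodes the Schur–Cohn condition `|p| < 1 + q`; outside
`-1 / 3 ≤ γ ≤ 1` the condition `q < 1` no longer follows from it. -/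
theorem fgm_error_matrix_schur_stable_general {C : Matrix ι ι ℂ} {γ : ℝ}
    (hγ : γ ∈ Icc (-1 / 3) 1)
    (hC : spectrum ℂ C ⊆ Complex.ofReal '' Ioo 0 (2 * (1 + γ) / (1 + 2 * γ))) :
    ∀ μ ∈ spectrum ℂ (fgmErrorMatrix C γ), ‖μ‖ < 1 := by
  intro μ hμ
  obtain ⟨_, hl, hμ_eq⟩ := exists_mem_spectrum_of_mem_spectrum_fgmErrorMatrix hμ
  obtain ⟨l, ⟨hl_pos, hl_lt⟩, rfl⟩ := hC hl
  obtain ⟨hγ_ge, hγ_le⟩ := hγ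
  rw [lt_div_iff₀ (by linarith)] at hl_lt
  have hp : |(1 + γ) * (1 - l)| < 1 + γ * (1 - l) := abs_lt.mpr ⟨by linarith, by linarith⟩
  have hq : γ * (1 - l) < 1 := by
    rcases le_total l 1 with hl_le_one | hl_ge_one
    · calc γ * (1 - l) ≤ 1 * (1 - l) := by gcongr
        _ < 1 := by linarith
    · calc γ * (1 - l) = -γ * (l - 1) := by ring
        _ ≤ (1 + 2 * γ) * (l - 1) := by gcongr; linarith
        _ < 1 := by linarith
  refine norm_lt_one_of_sq_sub_mul_add_eq_zero hp hq ?_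
  push_cast
  linear_combination hμ_eq

end FGM

/-- For a real symmetric positive definite `n×n` matrix `C` with all
eigenvalues at most one, and `γ ∈ [0,1]`, the block matrix
`M = [[(1+γ)(I−C), −γ(I−C)], [I, 0]]` is Schur stable: every complex eigenvalue of `M`
(element of the complex spectrum of `M` viewed over `ℂ`) has modulus strictly less
than one. -/
theorem fgm_error_matrix_schur_stable {n : ℕ} (C : Matrix (Fin n) (Fin n) ℝ)
    (hC : C.PosDef) (hCeig : ∀ lam ∈ spectrum ℝ C, lam ≤ 1)
    (γ : ℝ) (hγ : γ ∈ Set.Icc (0 : ℝ) 1) :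
    ∀ μ ∈ spectrum ℂ
      ((Matrix.fromBlocks
          ((1 + γ) • ((1 : Matrix (Fin n) (Fin n) ℝ) - C))
          ((-γ) • ((1 : Matrix (Fin n) (Fin n) ℝ) - C))
          (1 : Matrix (Fin n) (Fin n) ℝ)
          (0 : Matrix (Fin n) (Fin n) ℝ)).map Complex.ofReal),
      ‖μ‖ < 1 := by
  have hlt : ∀ l ∈ spectrum ℝ C, l < 2 * (1 + γ) / (1 + 2 * γ) := fun l hl ↦
    (hCeig l hl).trans_lt ((one_lt_div (by linarith [hγ.1])).mpr (by linarith))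
  exact fgmErrorMatrix_map Complex.ofRealHom C γ ▸ fgm_error_matrix_schur_stable_general
    ⟨by linarith [hγ.1], hγ.2⟩ (spectrum_map_ofReal_subset_image_Ioo_of_posDef hC hlt)
end

section
/- Let H be a real symmetric positive semidefinite n×n matrix, ρ > 0, Z = H + ρI, let F be a real m×n matrix with full row rank m (m ≤ n), and let M11 denote the top-left n×n block of the inverse of the KKT matrix K = [[Z, Fᵀ], [F, 0]]. Then M11 is symmetric positive semidefinite and its spectral norm satisfies ‖M11‖ ≤ ‖Z⁻¹‖. -/
/-!
The KKT matrix `K = [[Z, Fᴴ], [F, 0]]` is invertible because its Schur complement `-F * Z⁻¹ * Fᴴ` is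
negative definite. Let `M`, `C` be the left blocks of `K⁻¹`. Reading `K * K⁻¹ = 1` on its left
column gives `Z * M + Fᴴ * C = 1` and `F * M = 0`. Multiplying the first equation by `Mᴴ`
annihilates the term with `C`, so `Mᴴ * Z * M = Mᴴ`; hence `M` is Hermitian, `M = Mᴴ * Z * M` is
positive semidefinite, and expanding the square gives
`Z⁻¹ - M = (Z⁻¹ - M)ᴴ * Z * (Z⁻¹ - M) ≥ 0`. The operator norm is monotone on `0 ≤ M ≤ Z⁻¹`, because
the norm of a symmetric operator is the supremum of the absolute values of its Rayleigh quotients.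
-/

open scoped Matrix

section OperatorNorm

open scoped ComplexOrder

variable {𝕜 : Type*} [RCLike 𝕜]

theorem opNorm_le_opNorm_of_isPositive_of_le {E : Type*} [NormedAddCommGroup E]
    [InnerProductSpace 𝕜 E] {S T : E →L[𝕜] E} (hS : S.IsPositive) (hST : S ≤ T) :
    ‖S‖ ≤ ‖T‖ := by
  rw [S.norm_eq_iSup_rayleighQuotient hS.isSymmetric]
  refine ciSup_le fun x ↦ ?_
  have hS_nonneg : 0 ≤ S.rayleighQuotient x := div_nonneg (hS.2 x) (sq_nonneg _)
  have hdiff_nonneg : 0 ≤ (T - S).rayleighQuotient x := div_nonneg (hST.2 x) (sq_nonneg _)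
  calc |S.rayleighQuotient x| = S.rayleighQuotient x := abs_of_nonneg hS_nonneg
    _ ≤ S.rayleighQuotient x + (T - S).rayleighQuotient x := le_add_of_nonneg_right hdiff_nonneg
    _ = T.rayleighQuotient x := by rw [← S.rayleighQuotient_add, add_sub_cancel]
    _ ≤ |T.rayleighQuotient x| := le_abs_self _
    _ ≤ ‖T‖ := T.rayleighQuotient_le_norm x

variable {n : Type*} [Fintype n] [DecidableEq n] {A B : Matrix n n 𝕜}

theorem isPositive_toEuclideanCLM_iff :
    (Matrix.toEuclideanCLM (𝕜 := 𝕜) A).IsPositive ↔ A.PosSemidef := by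
  rw [← ContinuousLinearMap.isPositive_toLinearMap_iff,
    Matrix.coe_toEuclideanCLM_eq_toEuclideanLin, Matrix.isPositive_toEuclideanLin_iff]

theorem norm_toEuclideanCLM_le_of_posSemidef_of_posSemidef_sub (hA : A.PosSemidef)
    (hAB : (B - A).PosSemidef) :
    ‖Matrix.toEuclideanCLM (𝕜 := 𝕜) A‖ ≤ ‖Matrix.toEuclideanCLM (𝕜 := 𝕜) B‖ := by
  refine opNorm_le_opNorm_of_isPositive_of_le (isPositive_toEuclideanCLM_iff.mpr hA) ?_
  rw [ContinuousLinearMap.le_def, ← map_sub]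
  exact isPositive_toEuclideanCLM_iff.mpr hAB

end OperatorNorm

theorem linearIndependent_row_of_rank_eq_card {K m n : Type*} [Field K] [Fintype m] [Fintype n]
    {F : Matrix m n K} (hF : F.rank = Fintype.card m) : LinearIndependent K F.row := by
  rw [linearIndependent_iff_card_eq_finrank_span, Set.finrank, ← F.rank_eq_finrank_span_row, hF]

section KKT

variable {R m n : Type*}

/-- The KKT matrix `[[Z, Fᴴ], [F, 0]]` of the quadratic program with Hessian `Z` and constraint
matrix `F`. Over a ring with trivial star, `Fᴴ` is the transpose of `F`. -/
def kktMatrix [Zero R] [Star R] (Z : Matrix n n R) (F : Matrix m n R) :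
    Matrix (n ⊕ m) (n ⊕ m) R :=
  Matrix.fromBlocks Z Fᴴ F 0

variable [Fintype m] [Fintype n] [DecidableEq m] [DecidableEq n]

theorem isUnit_kktMatrix {K : Type*} [Field K] [PartialOrder K] [StarRing K]
    {Z : Matrix n n K} (hZ : Z.PosDef) {F : Matrix m n K} (hF : LinearIndependent K F.row) :
    IsUnit (kktMatrix Z F) := by
  let _ : Invertible Z := hZ.isUnit.invertible
  have schur_posDef : (F * Z⁻¹ * Fᴴ).PosDef :=
    hZ.inv.mul_mul_conjTranspose_same (Matrix.vecMul_injective_iff.mpr hF)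
  rw [kktMatrix, Matrix.isUnit_fromBlocks_iff_of_invertible₁₁, Matrix.invOf_eq_nonsing_inv,
    zero_sub]
  exact schur_posDef.isUnit.neg

variable [CommRing R] [StarRing R]

/-- The block `M₁₁` of the inverse `[[M₁₁, M₁₂], [M₂₁, M₂₂]]` of the KKT matrix. The inverse is
`Matrix.inv`, so the block is `0` when the KKT matrix is singular. -/
noncomputable def kktInvBlock₁₁ (Z : Matrix n n R) (F : Matrix m n R) : Matrix n n R :=
  (kktMatrix Z F)⁻¹.toBlocks₁₁

variable {Z : Matrix n n R} {F : Matrix m n R}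

theorem kktMatrix_mul_inv_left_column (hK : IsUnit (kktMatrix Z F)) :
    Z * kktInvBlock₁₁ Z F + Fᴴ * (kktMatrix Z F)⁻¹.toBlocks₂₁ = 1 ∧ F * kktInvBlock₁₁ Z F = 0 := by
  have mul_inv : kktMatrix Z F * (kktMatrix Z F)⁻¹ = 1 :=
    Matrix.mul_nonsing_inv _ ((Matrix.isUnit_iff_isUnit_det _).mp hK)
  rw [← Matrix.fromBlocks_toBlocks (kktMatrix Z F)⁻¹] at mul_inv
  nth_rw 1 [kktMatrix] at mul_inv
  rw [Matrix.fromBlocks_multiply, ← Matrix.fromBlocks_one, Matrix.fromBlocks_inj] at mul_inv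
  obtain ⟨top_left, -, bottom_left, -⟩ := mul_inv
  exact ⟨top_left, by rwa [Matrix.zero_mul, add_zero] at bottom_left⟩

theorem conjTranspose_kktInvBlock₁₁_mul_mul_self (hK : IsUnit (kktMatrix Z F)) :
    (kktInvBlock₁₁ Z F)ᴴ * Z * kktInvBlock₁₁ Z F = (kktInvBlock₁₁ Z F)ᴴ := by
  obtain ⟨stationarity, feasibility⟩ := kktMatrix_mul_inv_left_column hK
  set M := kktInvBlock₁₁ Z F
  set C := (kktMatrix Z F)⁻¹.toBlocks₂₁
  have feasibility_star : Mᴴ * Fᴴ = 0 := by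
    rw [← Matrix.conjTranspose_mul, feasibility, Matrix.conjTranspose_zero]
  calc Mᴴ * Z * M = Mᴴ * (Z * M + Fᴴ * C) := by
        rw [Matrix.mul_add, ← Matrix.mul_assoc Mᴴ Fᴴ, feasibility_star, Matrix.zero_mul, add_zero,
          Matrix.mul_assoc]
    _ = Mᴴ := by rw [stationarity, Matrix.mul_one]

theorem isHermitian_kktInvBlock₁₁ (hZ : Z.IsHermitian) (hK : IsUnit (kktMatrix Z F)) :
    (kktInvBlock₁₁ Z F).IsHermitian := by
  have := Matrix.isHermitian_conjTranspose_mul_mul (kktInvBlock₁₁ Z F) hZ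
  rwa [conjTranspose_kktInvBlock₁₁_mul_mul_self hK, Matrix.isHermitian_conjTranspose_iff] at this

theorem kktInvBlock₁₁_mul_mul_self (hZ : Z.IsHermitian) (hK : IsUnit (kktMatrix Z F)) :
    kktInvBlock₁₁ Z F * Z * kktInvBlock₁₁ Z F = kktInvBlock₁₁ Z F := by
  simpa only [(isHermitian_kktInvBlock₁₁ hZ hK).eq] using
    conjTranspose_kktInvBlock₁₁_mul_mul_self hK

theorem inv_sub_kktInvBlock₁₁_mul_mul_self (hZ : Z.IsHermitian) (hZu : IsUnit Z)
    (hK : IsUnit (kktMatrix Z F)) :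
    (Z⁻¹ - kktInvBlock₁₁ Z F) * Z * (Z⁻¹ - kktInvBlock₁₁ Z F) = Z⁻¹ - kktInvBlock₁₁ Z F := by
  have hdet : IsUnit Z.det := (Matrix.isUnit_iff_isUnit_det Z).mp hZu
  have hMZM := kktInvBlock₁₁_mul_mul_self hZ hK
  rw [Matrix.sub_mul, Matrix.nonsing_inv_mul Z hdet, Matrix.sub_mul, Matrix.one_mul,
    Matrix.mul_sub, Matrix.mul_nonsing_inv_cancel_right Z _ hdet, hMZM, sub_self, sub_zero]

variable [PartialOrder R]

theorem posSemidef_kktInvBlock₁₁ (hZ : Z.PosSemidef) (hK : IsUnit (kktMatrix Z F)) :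
    (kktInvBlock₁₁ Z F).PosSemidef := by
  have := hZ.conjTranspose_mul_mul_same (kktInvBlock₁₁ Z F)
  rwa [conjTranspose_kktInvBlock₁₁_mul_mul_self hK, Matrix.posSemidef_conjTranspose_iff] at this

theorem posSemidef_inv_sub_kktInvBlock₁₁ (hZ : Z.PosSemidef) (hZu : IsUnit Z)
    (hK : IsUnit (kktMatrix Z F)) : (Z⁻¹ - kktInvBlock₁₁ Z F).PosSemidef := by
  have sub_isHermitian : (Z⁻¹ - kktInvBlock₁₁ Z F).IsHermitian :=
    hZ.isHermitian.inv.sub (isHermitian_kktInvBlock₁₁ hZ.isHermitian hK)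
  have := hZ.conjTranspose_mul_mul_same (Z⁻¹ - kktInvBlock₁₁ Z F)
  rwa [sub_isHermitian.eq, inv_sub_kktInvBlock₁₁_mul_mul_self hZ.isHermitian hZu hK] at this

open scoped ComplexOrder in
theorem kkt_M11_psd_and_norm_bound_general {𝕜 : Type*} [RCLike 𝕜] {Z : Matrix n n 𝕜}
    (hZ : Z.PosDef) {F : Matrix m n 𝕜} (hF : LinearIndependent 𝕜 F.row) :
    (kktInvBlock₁₁ Z F).PosSemidef ∧
      ‖Matrix.toEuclideanCLM (𝕜 := 𝕜) (kktInvBlock₁₁ Z F)‖ ≤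
        ‖Matrix.toEuclideanCLM (𝕜 := 𝕜) Z⁻¹‖ := by
  have hK : IsUnit (kktMatrix Z F) := isUnit_kktMatrix hZ hF
  have hM : (kktInvBlock₁₁ Z F).PosSemidef := posSemidef_kktInvBlock₁₁ hZ.posSemidef hK
  exact ⟨hM, norm_toEuclideanCLM_le_of_posSemidef_of_posSemidef_sub hM
    (posSemidef_inv_sub_kktInvBlock₁₁ hZ.posSemidef hZ.isUnit hK)⟩

end KKT

/-- With `Z = H + ρI`, `F` of full row rank, and `M11` the top-left block of
the inverse of the KKT matrix `[[Z, Fᵀ], [F, 0]]`, the matrix `M11` is symmetric positive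
semidefinite and its spectral (operator) norm satisfies `‖M11‖ ≤ ‖Z⁻¹‖`.  The spectral norm
is expressed via `Matrix.toEuclideanCLM`, the action of a matrix as a continuous linear map
on Euclidean space. -/
theorem kkt_M11_psd_and_norm_bound {n m : ℕ} (H : Matrix (Fin n) (Fin n) ℝ)
    (hH : H.PosSemidef) (ρ : ℝ) (hρ : 0 < ρ)
    (F : Matrix (Fin m) (Fin n) ℝ) (hmn : m ≤ n) (hF : F.rank = m)
    (Z : Matrix (Fin n) (Fin n) ℝ)
    (hZdef : Z = H + ρ • (1 : Matrix (Fin n) (Fin n) ℝ))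
    (M11 : Matrix (Fin n) (Fin n) ℝ)
    (hM11 : M11 = ((Matrix.fromBlocks Z F.transpose F
      (0 : Matrix (Fin m) (Fin m) ℝ))⁻¹).toBlocks₁₁) :
    M11.PosSemidef ∧
      ‖Matrix.toEuclideanCLM (𝕜 := ℝ) M11‖ ≤ ‖Matrix.toEuclideanCLM (𝕜 := ℝ) Z⁻¹‖ := by
  have hZ : Z.PosDef := hZdef ▸ .posSemidef_add hH (.smul .one hρ)
  have hFrow : LinearIndependent ℝ F.row :=
    linearIndependent_row_of_rank_eq_card (by rw [hF, Fintype.card_fin])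
  have hM : M11 = kktInvBlock₁₁ Z F := by
    rw [hM11, kktInvBlock₁₁, kktMatrix, Matrix.conjTranspose_eq_transpose_of_trivial]
  exact hM ▸ kkt_M11_psd_and_norm_bound_general hZ hFrow
end

section
/- Let f(z) = ½·zᵀHz + zᵀq, where H is a real symmetric positive definite n×n matrix and q ∈ ℝⁿ, and let K ⊆ ℝⁿ be a nonempty closed convex set. Let μ > 0 be a lower bound on the smallest eigenvalue of H and L ≥ μ an upper bound on the largest eigenvalue of H, let κ = L/μ, and let β = (√L − √μ)/(√L + √μ). Given z₀ ∈ K and y₀ = z₀, define for i ≥ 0 the fast gradient method iterates t_i = y_i − (1/L)·(H·y_i + q), z_{i+1} = π_K(t_i), y_{i+1} = (1+β)·z_{i+1} − β·z_i, where π_K is the Euclidean projection onto K. Then, with f* = min_{z∈K} f(z), the iterates satisfy f(z_i) − f* ≤ min{ (1 − 1/√κ)^i , 4κ/(2√κ + i)² } · 2·( f(z₀) − f* ) for all i ≥ 0. -/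
open scoped RealInnerProductSpace

/-! Write `μ = L s²` with `0 < s ≤ 1`, so that `s = 1/√κ` and `β = (1 - s)/(1 + s)`. Nesterov's
auxiliary points `v i = s⁻¹ ((1 + s) y i - z i)` satisfy `v 0 = z 0` and
`v (i + 1) = (1 - s) v i + s y i - s⁻¹ (y i - z (i + 1))`. Comparing the projected gradient step
at `y i` with the minimiser `x` (weight `s`) and with `z i` (weight `1 - s`) makes the potential
`f (z i) - f x + μ/2 ‖v i - x‖²` contract by the factor `1 - s`. Strong convexity bounds its initial
value by `2 (f (z 0) - f x)`. The sublinear rate is never smaller than the linear one, by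
Bernoulli's inequality and `(1 - s) (1 + s/2)² ≤ 1`.
-/

lemma one_sub_pow_mul_one_add_sq_le_one {s : ℝ} (hs : 0 ≤ s) (hs1 : s ≤ 1) (i : ℕ) :
    (1 - s) ^ i * (1 + i * (s / 2)) ^ 2 ≤ 1 := by
  have hbase : (1 - s) * (1 + s / 2) ^ 2 ≤ 1 := by
    have : 0 ≤ s ^ 2 * (3 + s) := by positivity
    linarith
  have : 0 ≤ 1 - s := sub_nonneg.mpr hs1
  calc (1 - s) ^ i * (1 + i * (s / 2)) ^ 2
      ≤ (1 - s) ^ i * ((1 + s / 2) ^ i) ^ 2 := by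
        gcongr
        exact one_add_mul_le_pow (by linarith) i
    _ = ((1 - s) * (1 + s / 2) ^ 2) ^ i := by rw [mul_pow, ← pow_mul, ← pow_mul, mul_comm i]
    _ ≤ 1 := pow_le_one₀ (by positivity) hbase

lemma one_sub_inv_pow_le_div_sq {r : ℝ} (hr : 1 ≤ r) (i : ℕ) :
    (1 - 1 / r) ^ i ≤ 4 * r ^ 2 / (2 * r + i) ^ 2 := by
  have hr0 : 0 < r := one_pos.trans_le hr
  have hrate := one_sub_pow_mul_one_add_sq_le_one (one_div_nonneg.mpr hr0.le)
    ((div_le_one hr0).mpr hr) i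
  calc (1 - 1 / r) ^ i ≤ 1 / (1 + i * (1 / r / 2)) ^ 2 := (le_div_iff₀ (by positivity)).mpr hrate
    _ = 4 * r ^ 2 / (2 * r + i) ^ 2 := by
        field_simp
        norm_num

section FastGradient

variable {E : Type*} [NormedAddCommGroup E]

/-- `p` is a metric projection of `u` onto `K`, i.e. a point of `K` nearest to `u`. -/
def IsProjOnto (K : Set E) (u p : E) : Prop :=
  p ∈ K ∧ ∀ v ∈ K, ‖u - p‖ ≤ ‖u - v‖

variable [InnerProductSpace ℝ E]

/-- `f` is `μ`-strongly convex and `L`-smooth with gradient field `g`, encoded by the quadratic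
lower and upper bounds at every point, which force `g` to be the gradient of `f`. -/
structure IsStronglyConvexSmooth (μ L : ℝ) (f : E → ℝ) (g : E → E) : Prop where
  lower (x y : E) : f y + ⟪g y, x - y⟫ + μ / 2 * ‖x - y‖ ^ 2 ≤ f x
  upper (x y : E) : f x ≤ f y + ⟪g y, x - y⟫ + L / 2 * ‖x - y‖ ^ 2

/-- The iterates of the fast gradient method over `K` (Nesterov's constant step scheme II) for an
objective with gradient field `g`, with step size `1 / L` and momentum `β`. -/
structure IsFastGradientIteration (K : Set E) (g : E → E) (L β : ℝ) (z y : ℕ → E) : Prop where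
  zero_mem : z 0 ∈ K
  y_zero : y 0 = z 0
  isProjOnto (i : ℕ) : IsProjOnto K (y i - (1 / L) • g (y i)) (z (i + 1))
  y_succ (i : ℕ) : y (i + 1) = (1 + β) • z (i + 1) - β • z i

lemma IsProjOnto.inner_sub_sub_nonpos {K : Set E} (hK : Convex ℝ K) {u p x : E}
    (hp : IsProjOnto K u p) (hx : x ∈ K) : ⟪u - p, x - p⟫ ≤ 0 := by
  have : Nonempty K := ⟨⟨p, hp.1⟩⟩
  have hbdd : BddBelow (Set.range fun v : K => ‖u - v‖) :=
    ⟨0, Set.forall_mem_range.mpr fun _ => norm_nonneg _⟩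
  have hinf : ‖u - p‖ = ⨅ v : K, ‖u - v‖ :=
    le_antisymm (le_ciInf fun v => hp.2 v v.2) (ciInf_le hbdd ⟨p, hp.1⟩)
  exact (norm_eq_iInf_iff_real_inner_le_zero hK hp.1).mp hinf x hx

namespace IsStronglyConvexSmooth

variable {K : Set E} {μ L : ℝ} {f : E → ℝ} {g : E → E}

lemma projectedStep_le (hfg : IsStronglyConvexSmooth μ L f g) (hL : 0 < L) (hK : Convex ℝ K)
    {x y p : E} (hp : IsProjOnto K (y - (1 / L) • g y) p) (hx : x ∈ K) :
    f p + L * ⟪y - p, x - y⟫ + L / 2 * ‖y - p‖ ^ 2 + μ / 2 * ‖x - y‖ ^ 2 ≤ f x := by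
  have hproj : L * ⟪y - p, x - p⟫ ≤ ⟪g y, x - p⟫ := by
    have h := hp.inner_sub_sub_nonpos hK hx
    rw [sub_right_comm, inner_sub_left, real_inner_smul_left] at h
    calc L * ⟪y - p, x - p⟫ ≤ L * (1 / L * ⟪g y, x - p⟫) := by gcongr; linarith
      _ = ⟪g y, x - p⟫ := by field_simp
  have hsplit : ⟪y - p, x - p⟫ = ⟪y - p, x - y⟫ + ‖y - p‖ ^ 2 := by
    rw [← real_inner_self_eq_norm_sq, ← inner_add_right, sub_add_sub_cancel]
  have hgrad : ⟪g y, x - p⟫ = ⟪g y, x - y⟫ - ⟪g y, p - y⟫ := by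
    rw [← inner_sub_right, sub_sub_sub_cancel_right]
  have hlower := hfg.lower x y
  have hupper := hfg.upper p y
  rw [norm_sub_rev p y] at hupper
  rw [hsplit, hgrad] at hproj
  linarith

lemma isProjOnto_of_isMinOn (hfg : IsStronglyConvexSmooth μ L f g) (hL : 0 < L) {x : E}
    (hx : x ∈ K) (hmin : IsMinOn f K x) : IsProjOnto K (x - (1 / L) • g x) x := by
  refine ⟨hx, fun v hv => ?_⟩
  have hmodel : 0 ≤ ⟪g x, v - x⟫ + L / 2 * ‖v - x‖ ^ 2 := by
    linarith [isMinOn_iff.mp hmin v hv, hfg.upper v x]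
  -- Completing the square, the upper quadratic model is a squared distance to the gradient step.
  have hsquare : ‖x - (1 / L) • g x - v‖ ^ 2 = ‖x - (1 / L) • g x - x‖ ^ 2
      + 2 / L * (⟪g x, v - x⟫ + L / 2 * ‖v - x‖ ^ 2) := by
    have hv : x - (1 / L) • g x - v = -((1 / L) • g x + (v - x)) := by abel
    have hx : x - (1 / L) • g x - x = -((1 / L) • g x) := by abel
    rw [hv, hx, norm_neg, norm_neg, norm_add_sq_real, real_inner_smul_left]
    field_simp
    ring
  refine (sq_le_sq₀ (norm_nonneg _) (norm_nonneg _)).mp ?_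
  rw [hsquare]
  exact le_add_of_nonneg_right (by positivity)

lemma mul_norm_sub_sq_le_of_isMinOn (hfg : IsStronglyConvexSmooth μ L f g) (hL : 0 < L)
    (hK : Convex ℝ K) {x z : E} (hx : x ∈ K) (hmin : IsMinOn f K x) (hz : z ∈ K) :
    μ / 2 * ‖z - x‖ ^ 2 ≤ f z - f x := by
  have h := hfg.projectedStep_le hL hK (hfg.isProjOnto_of_isMinOn hL hx hmin) hz
  simp only [sub_self, inner_zero_left, norm_zero] at h
  linarith

end IsStronglyConvexSmooth

/-- Nesterov's auxiliary point, the centre of the estimating quadratic of the iterate `(z, y)`.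
It extrapolates from `z` through `y`: `z = (1 + s) y - s v` at the point `v`. -/
noncomputable def auxPoint (s : ℝ) (z y : E) : E := s⁻¹ • ((1 + s) • y - z)

lemma auxPoint_self {s : ℝ} (hs : s ≠ 0) (z : E) : auxPoint s z z = z := by
  rw [auxPoint, add_smul, one_smul, add_sub_cancel_left, inv_smul_smul₀ hs]

lemma sub_eq_smul_sub_auxPoint {s : ℝ} (hs : s ≠ 0) (z y : E) :
    z - y = s • (y - auxPoint s z y) := by
  rw [auxPoint, smul_sub, smul_inv_smul₀ hs]
  module

lemma auxPoint_momentum {s : ℝ} (hs : 0 < s) (z y p : E) :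
    auxPoint s p ((1 + (1 - s) / (1 + s)) • p - ((1 - s) / (1 + s)) • z)
      = (1 - s) • auxPoint s z y + s • y - s⁻¹ • (y - p) := by
  simp only [auxPoint]
  match_scalars <;> field_simp <;> ring

lemma norm_convexCombination_sub_sq_le {s : ℝ} (hs : 0 ≤ s) (hs1 : s ≤ 1) (v y x : E) :
    ‖(1 - s) • v + s • y - x‖ ^ 2 ≤ (1 - s) * ‖v - x‖ ^ 2 + s * ‖y - x‖ ^ 2 := by
  have hcomb : (1 - s) • v + s • y - x = (1 - s) • (v - x) + s • (y - x) := by module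
  rw [hcomb]
  exact ((convexOn_norm convex_univ).pow (fun _ _ => norm_nonneg _) 2).2 (Set.mem_univ (v - x))
    (Set.mem_univ (y - x)) (sub_nonneg.mpr hs1) hs (sub_add_cancel 1 s)

lemma IsStronglyConvexSmooth.potential_projectedStep_le {K : Set E} {s L : ℝ} {f : E → ℝ}
    {g : E → E} (hfg : IsStronglyConvexSmooth (L * s ^ 2) L f g) (hL : 0 < L) (hs : 0 < s)
    (hs1 : s ≤ 1) (hK : Convex ℝ K) {x z y p : E} (hx : x ∈ K) (hz : z ∈ K)
    (hp : IsProjOnto K (y - (1 / L) • g y) p) :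
    f p - f x + L * s ^ 2 / 2 *
        ‖(1 - s) • auxPoint s z y + s • y - s⁻¹ • (y - p) - x‖ ^ 2
      ≤ (1 - s) * (f z - f x + L * s ^ 2 / 2 * ‖auxPoint s z y - x‖ ^ 2) := by
  set v := auxPoint s z y
  set w := (1 - s) • v + s • y with hw
  have hs' : 0 ≤ 1 - s := sub_nonneg.mpr hs1
  have hcompare_x := mul_le_mul_of_nonneg_left (hfg.projectedStep_le hL hK hp hx) hs.le
  have hcompare_z : (1 - s) * (f p + L * ⟪y - p, z - y⟫ + L / 2 * ‖y - p‖ ^ 2)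
      ≤ (1 - s) * f z := by
    refine mul_le_mul_of_nonneg_left (le_trans ?_ (hfg.projectedStep_le hL hK hp hz)) hs'
    exact le_add_of_nonneg_right (by positivity)
  have hcross : s * ⟪y - p, x - y⟫ + (1 - s) * ⟪y - p, z - y⟫ = -(s * ⟪y - p, w - x⟫) := by
    have hvec : s • (x - y) + (1 - s) • (z - y) = -(s • (w - x)) := by
      rw [sub_eq_smul_sub_auxPoint hs.ne' z y, hw]
      module
    simpa only [inner_add_right, inner_neg_right, real_inner_smul_right]
      using congrArg (⟪y - p, ·⟫) hvec
  have hsquare : L * s ^ 2 / 2 * ‖w - s⁻¹ • (y - p) - x‖ ^ 2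
      = L * s ^ 2 / 2 * ‖w - x‖ ^ 2 - L * (s * ⟪y - p, w - x⟫) + L / 2 * ‖y - p‖ ^ 2 := by
    rw [sub_right_comm, norm_sub_sq_real, real_inner_smul_right, norm_smul, mul_pow,
      Real.norm_eq_abs, sq_abs, real_inner_comm]
    field_simp
  have hconvex : L * s ^ 2 / 2 * ‖w - x‖ ^ 2
      ≤ L * s ^ 2 / 2 * ((1 - s) * ‖v - x‖ ^ 2 + s * ‖x - y‖ ^ 2) := by
    rw [norm_sub_rev x y]
    gcongr
    exact norm_convexCombination_sub_sq_le hs.le hs1 v y x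
  rw [hsquare]
  linear_combination hcompare_x + hcompare_z + hconvex - L * hcross

namespace IsFastGradientIteration

variable {K : Set E} {f : E → ℝ} {g : E → E} {z y : ℕ → E}

lemma mem {L β : ℝ} (h : IsFastGradientIteration K g L β z y) : ∀ i, z i ∈ K
  | 0 => h.zero_mem
  | i + 1 => (h.isProjOnto i).1

lemma potential_le {s L : ℝ} (h : IsFastGradientIteration K g L ((1 - s) / (1 + s)) z y)
    (hfg : IsStronglyConvexSmooth (L * s ^ 2) L f g) (hL : 0 < L) (hs : 0 < s) (hs1 : s ≤ 1)
    (hK : Convex ℝ K) {x : E} (hx : x ∈ K) (hmin : IsMinOn f K x) (i : ℕ) :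
    f (z i) - f x + L * s ^ 2 / 2 * ‖auxPoint s (z i) (y i) - x‖ ^ 2
      ≤ (1 - s) ^ i * (2 * (f (z 0) - f x)) := by
  induction i with
  | zero =>
    rw [h.y_zero, auxPoint_self hs.ne', pow_zero]
    linarith [hfg.mul_norm_sub_sq_le_of_isMinOn hL hK hx hmin h.zero_mem]
  | succ i ih =>
    rw [h.y_succ, auxPoint_momentum hs (z i) (y i), pow_succ' (1 - s) i, mul_assoc]
    exact (hfg.potential_projectedStep_le hL hs hs1 hK hx (h.mem i) (h.isProjOnto i)).trans
      (mul_le_mul_of_nonneg_left ih (sub_nonneg.mpr hs1))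

lemma sub_le_pow_mul {s L : ℝ} (h : IsFastGradientIteration K g L ((1 - s) / (1 + s)) z y)
    (hfg : IsStronglyConvexSmooth (L * s ^ 2) L f g) (hL : 0 < L) (hs : 0 < s) (hs1 : s ≤ 1)
    (hK : Convex ℝ K) {fstar : ℝ} (hfstar : IsLeast (f '' K) fstar) (i : ℕ) :
    f (z i) - fstar ≤ (1 - s) ^ i * (2 * (f (z 0) - fstar)) := by
  obtain ⟨⟨x, hx, rfl⟩, hmin⟩ := hfstar
  have hminOn : IsMinOn f K x := isMinOn_iff.mpr fun v hv => hmin (Set.mem_image_of_mem f hv)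
  exact (le_add_of_nonneg_right (by positivity)).trans
    (h.potential_le hfg hL hs hs1 hK hx hminOn i)

end IsFastGradientIteration

section Quadratic

lemma quadratic_eq_add_inner_add {A : E →ₗ[ℝ] E} (hA : A.IsSymmetric) (q x y : E) :
    1 / 2 * ⟪x, A x⟫ + ⟪x, q⟫
      = 1 / 2 * ⟪y, A y⟫ + ⟪y, q⟫ + ⟪A y + q, x - y⟫ + 1 / 2 * ⟪x - y, A (x - y)⟫ := by
  have hxy : ⟪x, A y⟫ = ⟪y, A x⟫ := by rw [real_inner_comm, hA y x]
  simp only [map_sub, inner_sub_left, inner_sub_right, inner_add_left, hA y x, hA y y, hxy,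
    real_inner_comm x q, real_inner_comm y q]
  ring

lemma isStronglyConvexSmooth_quadratic {A : E →ₗ[ℝ] E} (hA : A.IsSymmetric) {μ L : ℝ}
    (hlower : ∀ w, μ * ‖w‖ ^ 2 ≤ ⟪w, A w⟫) (hupper : ∀ w, ⟪w, A w⟫ ≤ L * ‖w‖ ^ 2) (q : E) :
    IsStronglyConvexSmooth μ L (fun w => 1 / 2 * ⟪w, A w⟫ + ⟪w, q⟫) (fun w => A w + q) where
  lower x y := by
    rw [quadratic_eq_add_inner_add hA q x y]
    linarith [hlower (x - y)]
  upper x y := by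
    rw [quadratic_eq_add_inner_add hA q x y]
    linarith [hupper (x - y)]

variable {ι : Type*} [Fintype ι] [DecidableEq ι]

open scoped MatrixOrder in
lemma inner_toEuclideanLin_mono {A B : Matrix ι ι ℝ} (hAB : A ≤ B) (w : EuclideanSpace ℝ ι) :
    ⟪w, Matrix.toEuclideanLin A w⟫ ≤ ⟪w, Matrix.toEuclideanLin B w⟫ := by
  have hpos := (Matrix.isPositive_toEuclideanLin_iff.mpr (Matrix.le_iff.mp hAB)).2 w
  rw [map_sub, LinearMap.sub_apply, inner_sub_left, RCLike.re_to_real] at hpos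
  rw [real_inner_comm, real_inner_comm (Matrix.toEuclideanLin B w)]
  exact sub_nonneg.mp hpos

lemma inner_toEuclideanLin_algebraMap (m : ℝ) (w : EuclideanSpace ℝ ι) :
    ⟪w, Matrix.toEuclideanLin (algebraMap ℝ (Matrix ι ι ℝ) m) w⟫ = m * ‖w‖ ^ 2 := by
  rw [Algebra.algebraMap_eq_smul_one, map_smul, LinearMap.smul_apply, Matrix.toLpLin_one,
    LinearMap.id_apply, real_inner_smul_right, real_inner_self_eq_norm_sq]

open scoped MatrixOrder in
lemma mul_norm_sq_le_inner_toEuclideanLin {H : Matrix ι ι ℝ} (hH : H.IsHermitian) {μ : ℝ}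
    (hμ : ∀ lam ∈ spectrum ℝ H, μ ≤ lam) (w : EuclideanSpace ℝ ι) :
    μ * ‖w‖ ^ 2 ≤ ⟪w, Matrix.toEuclideanLin H w⟫ := by
  rw [← inner_toEuclideanLin_algebraMap]
  exact inner_toEuclideanLin_mono (algebraMap_le_of_le_spectrum hμ hH.isSelfAdjoint) w

open scoped MatrixOrder in
lemma inner_toEuclideanLin_le_mul_norm_sq {H : Matrix ι ι ℝ} (hH : H.IsHermitian) {L : ℝ}
    (hL : ∀ lam ∈ spectrum ℝ H, lam ≤ L) (w : EuclideanSpace ℝ ι) :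
    ⟪w, Matrix.toEuclideanLin H w⟫ ≤ L * ‖w‖ ^ 2 := by
  rw [← inner_toEuclideanLin_algebraMap]
  exact inner_toEuclideanLin_mono (le_algebraMap_of_spectrum_le hL hH.isSelfAdjoint) w

lemma isStronglyConvexSmooth_quadratic_of_spectrum {H : Matrix ι ι ℝ} (hH : H.IsHermitian)
    {μ L : ℝ} (hspec : ∀ lam ∈ spectrum ℝ H, μ ≤ lam ∧ lam ≤ L) (q : EuclideanSpace ℝ ι) :
    IsStronglyConvexSmooth μ L (fun w => 1 / 2 * ⟪w, Matrix.toEuclideanLin H w⟫ + ⟪w, q⟫)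
      (fun w => Matrix.toEuclideanLin H w + q) :=
  isStronglyConvexSmooth_quadratic (Matrix.isSymmetric_toEuclideanLin_iff.mpr hH)
    (mul_norm_sq_le_inner_toEuclideanLin hH fun lam hlam => (hspec lam hlam).1)
    (inner_toEuclideanLin_le_mul_norm_sq hH fun lam hlam => (hspec lam hlam).2) q

end Quadratic

theorem fast_gradient_method_convergence_general {K : Set E} (hK : Convex ℝ K) {μ L : ℝ}
    (hμ : 0 < μ) (hμL : μ ≤ L) {f : E → ℝ} {g : E → E} (hfg : IsStronglyConvexSmooth μ L f g)
    {fstar : ℝ} (hfstar : IsLeast (f '' K) fstar) {z y : ℕ → E}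
    (hzy : IsFastGradientIteration K g L ((√L - √μ) / (√L + √μ)) z y) (i : ℕ) :
    f (z i) - fstar ≤
      min ((1 - 1 / √(L / μ)) ^ i) (4 * (L / μ) / (2 * √(L / μ) + i) ^ 2) *
        (2 * (f (z 0) - fstar)) := by
  have hL : 0 < L := hμ.trans_le hμL
  have hr : 1 ≤ √(L / μ) := Real.one_le_sqrt.mpr ((one_le_div hμ).mpr hμL)
  have hr0 : 0 < √(L / μ) := one_pos.trans_le hr
  have hrsq : √(L / μ) ^ 2 = L / μ := Real.sq_sqrt (by positivity)
  have hμs : μ = L * (1 / √(L / μ)) ^ 2 := by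
    rw [div_pow, hrsq]
    field_simp
  have hβs : (√L - √μ) / (√L + √μ) = (1 - 1 / √(L / μ)) / (1 + 1 / √(L / μ)) := by
    have : 0 < √L := Real.sqrt_pos.mpr hL
    have : 0 < √μ := Real.sqrt_pos.mpr hμ
    rw [Real.sqrt_div hL.le]
    field_simp
  have hrate := one_sub_inv_pow_le_div_sq hr i
  rw [hrsq] at hrate
  rw [min_eq_left hrate]
  rw [hβs] at hzy
  exact hzy.sub_le_pow_mul (hμs ▸ hfg) hL (one_div_pos.mpr hr0) ((div_le_one hr0).mpr hr) hK
    hfstar i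

end FastGradient

/-- Convergence of the fast gradient method (constant step scheme II) for
minimizing the strongly convex quadratic `f(z) = ½ zᵀHz + zᵀq` over a nonempty closed
convex set `K ⊆ ℝⁿ`: with `0 < μ ≤ λ_min(H)`, `λ_max(H) ≤ L`, `κ = L/μ`,
`β = (√L − √μ)/(√L + √μ)`, projection `π_K` (the Euclidean projection onto `K`), iterates
`t_i = y_i − (1/L)(H y_i + q)`, `z_{i+1} = π_K(t_i)`, `y_{i+1} = (1+β) z_{i+1} − β z_i`
started at `z₀ ∈ K`, `y₀ = z₀`, and `f* = min_{z ∈ K} f(z)`, one has for all `i`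
`f(z_i) − f* ≤ min{(1 − 1/√κ)^i, 4κ/(2√κ + i)²} · 2 (f(z₀) − f*)`. -/
theorem fast_gradient_method_convergence {n : ℕ}
    (H : Matrix (Fin n) (Fin n) ℝ) (hH : H.PosDef)
    (q : EuclideanSpace ℝ (Fin n)) (K : Set (EuclideanSpace ℝ (Fin n)))
    (hKne : K.Nonempty) (hKclosed : IsClosed K) (hKconvex : Convex ℝ K)
    (μ L : ℝ) (hμ : 0 < μ) (hμL : μ ≤ L)
    (hspec : ∀ lam ∈ spectrum ℝ H, μ ≤ lam ∧ lam ≤ L)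
    (κ β : ℝ) (hκ : κ = L / μ)
    (hβ : β = (Real.sqrt L - Real.sqrt μ) / (Real.sqrt L + Real.sqrt μ))
    (f : EuclideanSpace ℝ (Fin n) → ℝ)
    (hfdef : ∀ w, f w = (1 / 2) * ⟪w, Matrix.toEuclideanLin H w⟫ + ⟪w, q⟫)
    (proj : EuclideanSpace ℝ (Fin n) → EuclideanSpace ℝ (Fin n))
    (hproj : ∀ w, proj w ∈ K ∧ ∀ v ∈ K, ‖w - proj w‖ ≤ ‖w - v‖)
    (fstar : ℝ) (hfstar : IsLeast (f '' K) fstar)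
    (z y t : ℕ → EuclideanSpace ℝ (Fin n))
    (hz0 : z 0 ∈ K) (hy0 : y 0 = z 0)
    (ht : ∀ i, t i = y i - (1 / L) • (Matrix.toEuclideanLin H (y i) + q))
    (hz : ∀ i, z (i + 1) = proj (t i))
    (hy : ∀ i, y (i + 1) = (1 + β) • z (i + 1) - β • z i) :
    ∀ i : ℕ, f (z i) - fstar ≤
      min ((1 - 1 / Real.sqrt κ) ^ i) (4 * κ / (2 * Real.sqrt κ + i) ^ 2) *
        (2 * (f (z 0) - fstar)) := by
  obtain rfl : f = _ := funext hfdef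
  subst hκ hβ
  exact fast_gradient_method_convergence_general hKconvex hμ hμL
    (isStronglyConvexSmooth_quadratic_of_spectrum hH.isHermitian hspec q) hfstar
    ⟨hz0, hy0, fun i => hz i ▸ ht i ▸ hproj (t i), hy⟩
end
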